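/- Let Ω ⊂ ℂⁿ (n ≥ 2) be a bounded domain, U ⊆ ℂⁿ an open set such that Ω ∩ U is log-type convex, and ξ ∈ ∂Ω ∩ U. Fix κ ≥ 0. For any ε > 0 with B_ε(ξ) ⊆ U, there exist δ > 0 and C > 0 with the following property: for any p, q ∈ Ω ∩ B_δ(ξ) such that there exists a (1,κ)-almost geodesic σ : [a,b] → Ω (for the Kobayashi distance K_Ω) with σ(a) = p and σ(b) = q, there exists a C-rough geodesic σ̃ : [a,b] → Ω joining p and q whose image is contained in B_ε(ξ). -/

import Mathlib

open Metric Set MeasureTheory Filter Topology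

noncomputable section

variable {E : Type*} [NormedAddCommGroup E] [NormedSpace ℂ E]

/-- Distance from `x` to the boundary of `D`. -/
def bdist (D : Set E) (x : E) : ℝ := Metric.infDist x (frontier D)

/-- Distance from `x` to the boundary of `D` along the complex line `x + ℂ v`. -/
def bdistDir (D : Set E) (x v : E) : ℝ :=
  Metric.infDist x (frontier D ∩ {w | ∃ c : ℂ, w = x + c • v})

/-- The infinitesimal Kobayashi (pseudo-)metric of `D ⊆ E`. -/
def kobMetric (D : Set E) (x v : E) : ℝ :=
  sInf { r : ℝ | ∃ (f : ℂ → E) (ξ : ℂ),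
    DifferentiableOn ℂ f (ball (0:ℂ) 1) ∧ MapsTo f (ball (0:ℂ) 1) D ∧
    f 0 = x ∧ ξ • derivWithin f (ball (0:ℂ) 1) 0 = v ∧ r = ‖ξ‖ }

/-- `σ` is absolutely continuous on `[a,b]`, with a.e. derivative `g`. -/
def IsACWithDeriv (σ g : ℝ → E) (a b : ℝ) : Prop :=
  IntervalIntegrable g volume a b ∧
  ∀ t ∈ Icc a b, σ t = σ a + ∫ s in a..t, g s

/-- The Kobayashi pseudo-distance of `D`, defined via lengths of absolutely
continuous curves (Venturini's description). -/
def kobDist (D : Set E) (x y : E) : ℝ :=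
  sInf { r : ℝ | ∃ (a b : ℝ) (σ g : ℝ → E), a ≤ b ∧
    IsACWithDeriv σ g a b ∧ MapsTo σ (Icc a b) D ∧ σ a = x ∧ σ b = y ∧
    r = ∫ t in a..b, kobMetric D (σ t) (g t) }

/-- Log-type convex domain, with explicit constants `C, ν > 0`. -/
def LogTypeConvexWith (D : Set E) (C ν : ℝ) : Prop :=
  IsOpen D ∧ D.Nonempty ∧ Bornology.IsBounded D ∧ Convex ℝ D ∧ 0 < C ∧ 0 < ν ∧
  ∀ z ∈ D, ∀ v : E, v ≠ 0 →
    bdistDir D z v ≤ C / |Real.log (bdist D z)| ^ (1 + ν)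

/-- Log-type convex domain. -/
def LogTypeConvex (D : Set E) : Prop := ∃ C ν : ℝ, LogTypeConvexWith D C ν

/-- A `ℂ`-convex set: every nonempty intersection with a complex affine line is
connected and simply connected. -/
def CConvex (D : Set E) : Prop :=
  ∀ z v : E, v ≠ 0 → (D ∩ {w | ∃ c : ℂ, w = z + c • v}).Nonempty →
    IsConnected (D ∩ {w | ∃ c : ℂ, w = z + c • v}) ∧
    SimplyConnectedSpace ↥(D ∩ {w | ∃ c : ℂ, w = z + c • v})

/-- Log-type `ℂ`-convex domain. -/
def LogTypeCConvex (D : Set E) : Prop :=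
  IsOpen D ∧ D.Nonempty ∧ Bornology.IsBounded D ∧ CConvex D ∧
  ∃ C ν : ℝ, 0 < C ∧ 0 < ν ∧
    ∀ z ∈ D, ∀ v : E, v ≠ 0 →
      bdistDir D z v ≤ C / |Real.log (bdist D z)| ^ (1 + ν)

/-- `σ : [a,b] → D` (with a.e. derivative `g`) is a `(λ,κ)`-almost geodesic for the
Kobayashi distance of `D`. -/
def AlmostGeodesicOn (D : Set E) (lam kap : ℝ) (σ g : ℝ → E) (a b : ℝ) : Prop :=
  MapsTo σ (Icc a b) D ∧ IsACWithDeriv σ g a b ∧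
  (∀ s ∈ Icc a b, ∀ t ∈ Icc a b,
    (1 / lam) * |t - s| - kap ≤ kobDist D (σ s) (σ t) ∧
    kobDist D (σ s) (σ t) ≤ lam * |t - s| + kap) ∧
  (∀ᵐ t ∂volume, t ∈ Icc a b → kobMetric D (σ t) (g t) ≤ lam)

/-- `σ : [a,b] → D` is a `C`-rough geodesic for the Kobayashi distance of `D`. -/
def RoughGeodesicOn (D : Set E) (C : ℝ) (σ : ℝ → E) (a b : ℝ) : Prop :=
  MapsTo σ (Icc a b) D ∧
  ∀ s ∈ Icc a b, ∀ t ∈ Icc a b,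
    |t - s| - C ≤ kobDist D (σ s) (σ t) ∧ kobDist D (σ s) (σ t) ≤ |t - s| + C

/-- `ρ` is a `C¹` local defining function for `D` near `ξ` on the open set `W`. -/
def IsLocalDefiningFn (D : Set E) (ξ : E) (W : Set E) (ρ : E → ℝ) : Prop :=
  IsOpen W ∧ ξ ∈ W ∧ ContDiffOn ℝ 1 ρ W ∧ (∀ x ∈ W, fderiv ℝ ρ x ≠ 0) ∧
  D ∩ W = {x ∈ W | ρ x < 0} ∧ frontier D ∩ W = {x ∈ W | ρ x = 0}

/-- `ξ` is a Dini-smooth boundary point of `D`: the boundary is `C¹` near `ξ` and the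
unit normal admits a modulus of continuity `ω` satisfying the Dini condition. -/
def DiniSmoothBoundaryPoint (D : Set E) (ξ : E) : Prop :=
  ∃ (W : Set E) (ρ : E → ℝ) (ω : ℝ → ℝ),
    IsLocalDefiningFn D ξ W ρ ∧
    (∀ t ∈ Icc (0:ℝ) 1, 0 ≤ ω t) ∧ MonotoneOn ω (Icc (0:ℝ) 1) ∧
    IntegrableOn (fun t => ω t / t) (Ioc (0:ℝ) 1) ∧
    ∀ x ∈ frontier D ∩ W, ∀ y ∈ frontier D ∩ W, ‖x - y‖ ≤ 1 →
      ‖(‖fderiv ℝ ρ x‖)⁻¹ • fderiv ℝ ρ x - (‖fderiv ℝ ρ y‖)⁻¹ • fderiv ℝ ρ y‖ ≤ ω ‖x - y‖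

/-- `D` has `C^{1,ε}` boundary: near every boundary point there is a `C¹` defining
function whose differential is `ε`-Hölder. -/
def HolderC1Boundary (D : Set E) (ε : ℝ) : Prop :=
  ∀ ξ ∈ frontier D, ∃ (W : Set E) (ρ : E → ℝ) (M : ℝ), 0 < M ∧
    IsLocalDefiningFn D ξ W ρ ∧
    ∀ x ∈ W, ∀ y ∈ W, ‖fderiv ℝ ρ x - fderiv ℝ ρ y‖ ≤ M * ‖x - y‖ ^ ε

/-- The complex affine tangent hyperplane of `∂D` at `x`, computed from a local
defining function `ρ`. -/
def complexTangentHyperplane (ρ : E → ℝ) (x : E) : Set E :=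
  {w : E | fderiv ℝ ρ x (w - x) = 0 ∧ fderiv ℝ ρ x ((Complex.I : ℂ) • (w - x)) = 0}

/-- The Gromov product of `x` and `y` with respect to the base point `o`, for the
Kobayashi distance of `D`. -/
def gromovProd (D : Set E) (o x y : E) : ℝ :=
  (kobDist D x o + kobDist D o y - kobDist D x y) / 2

end


/-! ### Helper lemmas -/

lemma kobMetric_bddBelow {E : Type*} [NormedAddCommGroup E] [NormedSpace ℂ E]
    (D : Set E) (x v : E) : BddBelow { r : ℝ | ∃ (f : ℂ → E) (ξ : ℂ),
    DifferentiableOn ℂ f (ball (0:ℂ) 1) ∧ MapsTo f (ball (0:ℂ) 1) D ∧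
    f 0 = x ∧ ξ • derivWithin f (ball (0:ℂ) 1) 0 = v ∧ r = ‖ξ‖ } :=
  ⟨0, by rintro r ⟨f, ξ, -, -, -, -, rfl⟩; exact norm_nonneg _⟩

lemma kobMetric_nonneg {E : Type*} [NormedAddCommGroup E] [NormedSpace ℂ E]
    (D : Set E) (x v : E) : 0 ≤ kobMetric D x v :=
  Real.sInf_nonneg (by rintro r ⟨f, ξ, -, -, -, -, rfl⟩; exact norm_nonneg _)

lemma kobMetric_mem_of_ball {E : Type*} [NormedAddCommGroup E] [NormedSpace ℂ E]
    {D : Set E} {x : E} {ρ : ℝ} (hρ : 0 < ρ) (hb : ball x ρ ⊆ D) (v : E) :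
    ∃ (f : ℂ → E) (ξ : ℂ),
    DifferentiableOn ℂ f (ball (0:ℂ) 1) ∧ MapsTo f (ball (0:ℂ) 1) D ∧
    f 0 = x ∧ ξ • derivWithin f (ball (0:ℂ) 1) 0 = v ∧ ‖v‖ / ρ = ‖ξ‖ := by
  rcases eq_or_ne v 0 with rfl | hv
  · refine ⟨fun _ => x, 0, differentiableOn_const _, fun z _ => hb (mem_ball_self hρ), rfl, ?_, ?_⟩
    · simp
    · simp
  have hv' : 0 < ‖v‖ := norm_pos_iff.2 hv
  refine ⟨fun z => x + (z * ((ρ / ‖v‖ : ℝ) : ℂ)) • v, ((‖v‖ / ρ : ℝ) : ℂ), ?_, ?_, by simp, ?_, ?_⟩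
  · fun_prop
  · intro z hz
    apply hb
    rw [mem_ball_zero_iff] at hz
    rw [mem_ball, dist_eq_norm, add_sub_cancel_left, norm_smul, norm_mul, Complex.norm_real,
      Real.norm_of_nonneg (by positivity), mul_assoc, div_mul_cancel₀ _ hv'.ne']
    nlinarith
  · have h : HasDerivAt (fun z : ℂ => x + (z * ((ρ / ‖v‖ : ℝ) : ℂ)) • v)
        ((1 * ((ρ / ‖v‖ : ℝ) : ℂ)) • v) 0 :=
      (((hasDerivAt_id (0:ℂ)).mul_const _).smul_const v).const_add x
    rw [derivWithin_of_isOpen isOpen_ball (mem_ball_self one_pos), h.deriv, one_mul, smul_smul,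
      ← Complex.ofReal_mul]
    rw [div_mul_div_cancel₀ hρ.ne', div_self hv'.ne']
    simp
  · rw [Complex.norm_real, Real.norm_of_nonneg (by positivity)]

lemma kobMetric_le {E : Type*} [NormedAddCommGroup E] [NormedSpace ℂ E]
    {D : Set E} {x : E} {ρ : ℝ} (hρ : 0 < ρ) (hb : ball x ρ ⊆ D) (v : E) :
    kobMetric D x v ≤ ‖v‖ / ρ :=
  csInf_le (kobMetric_bddBelow D x v) (kobMetric_mem_of_ball hρ hb v)

/-- Schwarz lemma for maps into the left half plane. -/
lemma halfplane_schwarz (h : ℂ → ℂ) (r : ℝ) (hr : 0 < r)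
    (hd : DifferentiableOn ℂ h (ball 0 r)) (hneg : ∀ z ∈ ball (0:ℂ) r, (h z).re < 0) :
    r * ‖deriv h 0‖ ≤ 2 * ‖h 0‖ := by
  have h0 : (0:ℂ) ∈ ball (0:ℂ) r := mem_ball_self hr
  have hh0 := hneg 0 h0
  set w := h 0 with hw
  have hden : ∀ z ∈ ball (0:ℂ) r, h z + (starRingEnd ℂ) w ≠ 0 := by
    intro z hz he
    have := congrArg Complex.re he
    have h1 := hneg z hz
    simp at this
    linarith
  let φ : ℂ → ℂ := fun z => (h z - w) / (h z + (starRingEnd ℂ) w)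
  have hφd : DifferentiableOn ℂ φ (ball 0 r) :=
    (hd.sub_const _).div (hd.add_const _) hden
  have hφ0 : φ 0 = 0 := by simp [φ, ← hw]
  have hmaps : MapsTo φ (ball 0 r) (closedBall (φ 0) 1) := by
    intro z hz
    have h1 := hneg z hz
    rw [hφ0, mem_closedBall_zero_iff, norm_div]
    apply div_le_one_of_le₀ _ (norm_nonneg _)
    rw [← sq_le_sq₀ (norm_nonneg _) (norm_nonneg _), ← Complex.normSq_eq_norm_sq,
      ← Complex.normSq_eq_norm_sq, Complex.normSq_apply, Complex.normSq_apply]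
    simp
    nlinarith
  have hS := Complex.norm_deriv_le_div_of_mapsTo_ball hφd hmaps hr
  have hdh : HasDerivAt h (deriv h 0) 0 :=
    ((hd 0 h0).differentiableAt (isOpen_ball.mem_nhds h0)).hasDerivAt
  have hφ' := ((hdh.sub_const w).div (hdh.add_const ((starRingEnd ℂ) w)) (hden 0 h0)).deriv
  change deriv φ 0 = _ at hφ'
  rw [hφ', ← hw] at hS
  have e : (deriv h 0 * (w + (starRingEnd ℂ) w) - (w - w) * deriv h 0) /
      (w + (starRingEnd ℂ) w) ^ 2 = deriv h 0 / (w + (starRingEnd ℂ) w) := by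
    have := hden 0 h0
    rw [← hw] at this
    field_simp
    ring
  rw [e, norm_div, div_le_div_iff₀ (norm_pos_iff.2 (hden 0 h0)) hr] at hS
  have h2 : ‖w + (starRingEnd ℂ) w‖ ≤ 2 * ‖w‖ := by
    refine (norm_add_le _ _).trans ?_
    rw [RCLike.norm_conj]; linarith
  linarith

/-- Lower bound for discs through `z`, with localisation. -/
lemma kob_lower {E : Type*} [NormedAddCommGroup E] [NormedSpace ℂ E]
    {Ω D : Set E} (hDo : IsOpen D) (hDc : Convex ℝ D) {z v w : E} {c : ℂ}
    {R ε' : ℝ} (hR : 0 < R) (hε' : 0 < ε') (hε'R : ε' ≤ R)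
    (hΩR : ∀ x ∈ Ω, dist x z ≤ R) (hloc : Ω ∩ ball z ε' ⊆ D)
    (hw : w ∉ D) (hwz : w = z + c • v)
    {f : ℂ → E} {η : ℂ} (hf : DifferentiableOn ℂ f (ball 0 1)) (hfm : MapsTo f (ball 0 1) Ω)
    (hf0 : f 0 = z) (hfv : η • derivWithin f (ball (0:ℂ) 1) 0 = v) :
    ε' / R * ‖v‖ ≤ 2 * dist z w * ‖η‖ := by
  have h01 : (0:ℂ) ∈ ball (0:ℂ) 1 := mem_ball_self one_pos
  rw [derivWithin_of_isOpen isOpen_ball h01] at hfv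
  have hfd : HasDerivAt f (deriv f 0) 0 :=
    ((hf 0 h01).differentiableAt (isOpen_ball.mem_nhds h01)).hasDerivAt
  obtain ⟨L, hL⟩ := RCLike.geometric_hahn_banach_open_point (𝕜 := ℂ) hDc hDo hw
  set r := ε' / R with hr
  have hr0 : 0 < r := by positivity
  have hr1 : r ≤ 1 := by rw [hr]; exact div_le_one_of_le₀ hε'R hR.le
  have hsub : ball (0:ℂ) r ⊆ ball 0 1 := ball_subset_ball hr1
  have hmaps : MapsTo f (ball (0:ℂ) 1) (closedBall (f 0) R) := fun x hx => by
    rw [hf0]; exact hΩR _ (hfm hx)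
  have hD : ∀ ζ ∈ ball (0:ℂ) r, f ζ ∈ D := by
    intro ζ hζ
    refine hloc ⟨hfm (hsub hζ), ?_⟩
    have := Complex.dist_le_div_mul_dist_of_mapsTo_ball hf hmaps (hsub hζ)
    rw [hf0, div_one] at this
    rw [mem_ball] at hζ ⊢
    refine this.trans_lt ?_
    rw [hr, lt_div_iff₀ hR] at hζ
    linarith
  have hS := halfplane_schwarz (fun ζ => L (f ζ) - L w) r hr0
    ((L.differentiable.comp_differentiableOn (hf.mono hsub)).sub_const _)
    (fun ζ hζ => by
      have := hL _ (hD ζ hζ)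
      simp only [RCLike.re_to_complex] at this
      rw [Complex.sub_re]; linarith)
  have hd : deriv (fun ζ => L (f ζ) - L w) 0 = L (deriv f 0) :=
    ((L.hasFDerivAt.comp_hasDerivAt (0:ℂ) hfd).sub_const (L w)).deriv
  rw [hd, hf0] at hS
  have hzD : z ∈ D := by rw [← hf0]; exact hD 0 (mem_ball_self hr0)
  have hne := hL z hzD
  have e1 : L z - L w = - (c * L v) := by rw [hwz]; simp
  have hLv : L v ≠ 0 := by
    intro h0
    rw [h0, mul_zero, neg_zero, sub_eq_zero] at e1
    rw [e1] at hne; exact lt_irrefl _ hne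
  have e2 : L v = η * L (deriv f 0) := by rw [← hfv]; simp
  have hpos : 0 < ‖L (deriv f 0)‖ := norm_pos_iff.2 fun h0 => hLv (by rw [e2, h0, mul_zero])
  have e3 : dist z w = ‖c‖ * ‖v‖ := by rw [hwz]; simp [norm_smul]
  rw [e1, norm_neg, e2, norm_mul, norm_mul] at hS
  have : r ≤ 2 * (‖c‖ * ‖η‖) := by
    by_contra hcon
    push Not at hcon
    nlinarith
  rw [e3]
  nlinarith [norm_nonneg v]

/-- Integrated lower bound. -/
lemma kobMetric_lower {E : Type*} [NormedAddCommGroup E] [NormedSpace ℂ E]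
    {Ω D : Set E} (hΩo : IsOpen Ω) (hDo : IsOpen D) (hDc : Convex ℝ D) {z v : E}
    {R ε' : ℝ} (hR : 0 < R) (hε' : 0 < ε') (hε'R : ε' ≤ R) (hz : z ∈ Ω)
    (hΩR : ∀ x ∈ Ω, dist x z ≤ R) (hloc : Ω ∩ ball z ε' ⊆ D)
    (hne : (frontier D ∩ {w | ∃ c : ℂ, w = z + c • v}).Nonempty) :
    ε' / R * ‖v‖ ≤ 2 * bdistDir D z v * kobMetric Ω z v := by
  obtain ⟨ρ, hρ, hb⟩ := Metric.isOpen_iff.1 hΩo z hz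
  by_contra hcon
  push Not at hcon
  have hk0 := kobMetric_nonneg Ω z v
  have hb0 : 0 ≤ bdistDir D z v := Metric.infDist_nonneg
  -- perturb both infima
  have hcont : Tendsto (fun s : ℝ => 2 * (bdistDir D z v + s) * (kobMetric Ω z v + s)) (𝓝[>] 0)
      (𝓝 (2 * (bdistDir D z v + 0) * (kobMetric Ω z v + 0))) :=
    ((by fun_prop : Continuous (fun s : ℝ =>
      2 * (bdistDir D z v + s) * (kobMetric Ω z v + s))).tendsto 0).mono_left nhdsWithin_le_nhds
  simp only [add_zero] at hcont
  obtain ⟨s, hs, hs0⟩ := ((hcont.eventually (gt_mem_nhds hcon)).and self_mem_nhdsWithin).exists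
  have hs0 : 0 < s := hs0
  obtain ⟨_, ⟨f, η, hf, hfm, hf0, hfv, rfl⟩, hη⟩ :=
    Real.lt_sInf_add_pos (s := { r : ℝ | ∃ (f : ℂ → E) (ξ : ℂ),
      DifferentiableOn ℂ f (ball (0:ℂ) 1) ∧ MapsTo f (ball (0:ℂ) 1) Ω ∧
      f 0 = z ∧ ξ • derivWithin f (ball (0:ℂ) 1) 0 = v ∧ r = ‖ξ‖ })
      ⟨_, kobMetric_mem_of_ball hρ hb v⟩ hs0
  change ‖η‖ < kobMetric Ω z v + s at hη
  obtain ⟨w, ⟨hwf, c, hwc⟩, hwd⟩ := (Metric.infDist_lt_iff hne).1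
    (show Metric.infDist z (frontier D ∩ {w | ∃ c : ℂ, w = z + c • v}) < bdistDir D z v + s by
      unfold bdistDir; linarith)
  have hwD : w ∉ D := by
    rw [hDo.frontier_eq] at hwf; exact hwf.2
  have := kob_lower hDo hDc hR hε' hε'R hΩR hloc hwD hwc hf hfm hf0 hfv
  have h2 : 2 * dist z w * ‖η‖ ≤ 2 * (bdistDir D z v + s) * (kobMetric Ω z v + s) := by
    gcongr
  linarith

/-- Upper bound for the Kobayashi distance through a quadratic Bezier curve. -/
lemma kobDist_le_log {E : Type*} [NormedAddCommGroup E] [NormedSpace ℂ E] [CompleteSpace E]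
    {Ω D : Set E} (hDΩ : D ⊆ Ω) (hDc : Convex ℝ D) {o x y : E} {r m R : ℝ}
    (hr1 : r ≤ 1) (hm : 0 < m) (hmr : m ≤ r)
    (ho : ball o r ⊆ D) (hx : ball x m ⊆ D) (hy : ball y m ⊆ D)
    (hxo : ‖o - x‖ ≤ R) (hyo : ‖y - o‖ ≤ R) :
    kobDist Ω x y ≤ 16 * R / r * Real.log (2 / m) := by
  have hr : 0 < r := hm.trans_le hmr
  have hR : 0 ≤ R := (norm_nonneg _).trans hxo
  let γ : ℝ → E := fun s => ((1 - s) ^ 2) • x + (2 * s * (1 - s)) • o + (s ^ 2) • y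
  let g : ℝ → E := fun s => (2 * (1 - s)) • (o - x) + (2 * s) • (y - o)
  have hγd : ∀ s, HasDerivAt γ (g s) s := by
    intro s
    have h1 : HasDerivAt (fun s : ℝ => (1 - s) ^ 2) (-(2 * (1 - s))) s := by
      have := ((hasDerivAt_id s).const_sub 1).pow 2
      refine this.congr_deriv ?_
      simp
    have h2 : HasDerivAt (fun s : ℝ => 2 * s * (1 - s)) (2 * (1 - s) - 2 * s) s := by
      have := ((hasDerivAt_id s).const_mul 2).mul ((hasDerivAt_id s).const_sub 1)
      refine this.congr_deriv ?_
      simp; ring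
    have h3 : HasDerivAt (fun s : ℝ => s ^ 2) (2 * s) s := by
      have := (hasDerivAt_id s).pow 2
      refine this.congr_deriv ?_
      simp
    refine (((h1.smul_const x).add (h2.smul_const o)).add (h3.smul_const y)).congr_deriv ?_
    simp only [g]
    module
  have hgc : Continuous g := by fun_prop
  let ρ : ℝ → ℝ := fun s => 2 * s * (1 - s) * r + ((1 - s) ^ 2 + s ^ 2) * m
  have hρ : ∀ s ∈ Icc (0:ℝ) 1, r / 4 * ((s + m) * (1 - s + m)) ≤ ρ s := by
    rintro s ⟨hs0, hs1⟩
    have h1 : 0 ≤ s * (1 - s) := mul_nonneg hs0 (by linarith)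
    have h2 : (s + m) * (1 - s + m) ≤ s * (1 - s) + 2 * m := by nlinarith
    have h3 : r / 4 * ((s + m) * (1 - s + m)) ≤ r / 4 * (s * (1 - s) + 2 * m) := by gcongr
    have h4 : m / 2 ≤ ((1 - s) ^ 2 + s ^ 2) * m := by nlinarith [sq_nonneg (1 - 2 * s)]
    have h5 : r * m ≤ m := by nlinarith
    simp only [ρ]
    nlinarith [mul_nonneg h1 hr.le]
  have hρ0 : ∀ s ∈ Icc (0:ℝ) 1, 0 < ρ s := by
    intro s hs
    refine lt_of_lt_of_le ?_ (hρ s hs)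
    have : 0 < s + m := by linarith [hs.1]
    have : 0 < 1 - s + m := by linarith [hs.2]
    positivity
  have hball : ∀ s ∈ Icc (0:ℝ) 1, ball (γ s) (ρ s) ⊆ D := by
    intro s hs w hw
    have h0 := hρ0 s hs
    obtain ⟨hs0, hs1⟩ := hs
    set u : E := (ρ s)⁻¹ • (w - γ s) with hu
    have hu1 : ‖u‖ < 1 := by
      rw [hu, norm_smul, norm_inv, Real.norm_of_nonneg h0.le, inv_mul_lt_iff₀ h0, mul_one]
      rwa [mem_ball, dist_eq_norm] at hw
    have hwu : w = γ s + ρ s • u := by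
      rw [hu, smul_inv_smul₀ h0.ne']; abel
    have key : ∀ (p : E) (t : ℝ), 0 < t → p + t • u ∈ ball p t := by
      intro p t ht
      rw [mem_ball, dist_eq_norm, add_sub_cancel_left, norm_smul, Real.norm_of_nonneg ht.le]
      nlinarith
    have hX := hx (key x m hm)
    have hY := hy (key y m hm)
    have hO := ho (key o r hr)
    have he : w = (1 - s) • ((1 - s) • (x + m • u) + s • (o + r • u)) +
        s • ((1 - s) • (o + r • u) + s • (y + m • u)) := by
      rw [hwu]; simp only [γ, ρ]; module
    rw [he]
    have h1s : 0 ≤ 1 - s := by linarith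
    exact hDc (hDc hX hO h1s hs0 (by ring)) (hDc hO hY h1s hs0 (by ring)) h1s hs0 (by ring)
  have hmem : ∫ t in (0:ℝ)..1, kobMetric Ω (γ t) (g t) ∈ { r : ℝ | ∃ (a b : ℝ) (σ g : ℝ → E), a ≤ b ∧
      IsACWithDeriv σ g a b ∧ MapsTo σ (Icc a b) Ω ∧ σ a = x ∧ σ b = y ∧
      r = ∫ t in a..b, kobMetric Ω (σ t) (g t) } := by
    refine ⟨0, 1, γ, g, zero_le_one, ⟨hgc.intervalIntegrable _ _, ?_⟩, ?_, ?_, ?_, rfl⟩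
    · intro t _
      rw [intervalIntegral.integral_eq_sub_of_hasDerivAt (fun s _ => hγd s)
        (hgc.intervalIntegrable _ _)]
      abel
    · intro s hs
      exact hDΩ (hball s hs (mem_ball_self (hρ0 s hs)))
    · simp [γ]
    · simp [γ]
  have hle : kobDist Ω x y ≤ ∫ t in (0:ℝ)..1, kobMetric Ω (γ t) (g t) := by
    refine csInf_le ⟨0, ?_⟩ hmem
    rintro r ⟨a, b, σ, g, hab, -, -, -, -, rfl⟩
    exact intervalIntegral.integral_nonneg hab (fun t _ => kobMetric_nonneg _ _ _)
  refine hle.trans ((le_abs_self _).trans ?_)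
  rw [← Real.norm_eq_abs]
  have hi1 : IntervalIntegrable (fun s : ℝ => (s + m)⁻¹) volume 0 1 := by
    refine ContinuousOn.intervalIntegrable ?_
    rw [uIcc_of_le zero_le_one]
    exact (by fun_prop : ContinuousOn (fun s : ℝ => s + m) _).inv₀
      (fun s hs => by linarith [hs.1])
  have hi2 : IntervalIntegrable (fun s : ℝ => (1 - s + m)⁻¹) volume 0 1 := by
    refine ContinuousOn.intervalIntegrable ?_
    rw [uIcc_of_le zero_le_one]
    exact (by fun_prop : ContinuousOn (fun s : ℝ => 1 - s + m) _).inv₀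
      (fun s hs => by linarith [hs.2])
  have hI1 : ∫ s in (0:ℝ)..1, (s + m)⁻¹ = Real.log ((1 + m) / m) := by
    rw [intervalIntegral.integral_comp_add_right (fun s : ℝ => s⁻¹),
      integral_inv_of_pos (by linarith) (by linarith), zero_add]
  have hI2 : ∫ s in (0:ℝ)..1, (1 - s + m)⁻¹ = Real.log ((1 + m) / m) := by
    rw [← hI1]
    have := intervalIntegral.integral_comp_sub_left (fun s : ℝ => (s + m)⁻¹) (a := 0) (b := 1) 1
    simpa using this
  have hbd : ‖∫ t in (0:ℝ)..1, kobMetric Ω (γ t) (g t)‖ ≤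
      ∫ s in (0:ℝ)..1, 8 * R / r * ((s + m)⁻¹ + (1 - s + m)⁻¹) := by
    refine intervalIntegral.norm_integral_le_of_norm_le zero_le_one ?_ ((hi1.add hi2).const_mul _)
    refine Eventually.of_forall fun s hs => ?_
    have hs' : s ∈ Icc (0:ℝ) 1 := ⟨hs.1.le, hs.2⟩
    rw [Real.norm_of_nonneg (kobMetric_nonneg _ _ _)]
    refine (kobMetric_le (hρ0 s hs') ((hball s hs').trans hDΩ) _).trans ?_
    have hg : ‖g s‖ ≤ 2 * R := by
      refine (norm_add_le _ _).trans ?_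
      rw [norm_smul, norm_smul, Real.norm_of_nonneg (by linarith [hs'.2]),
        Real.norm_of_nonneg (by linarith [hs'.1])]
      nlinarith [hs'.1, hs'.2]
    have p1 : 0 < s + m := by linarith [hs'.1]
    have p2 : 0 < 1 - s + m := by linarith [hs'.2]
    calc ‖g s‖ / ρ s ≤ 2 * R / (r / 4 * ((s + m) * (1 - s + m))) :=
          div_le_div₀ (by positivity) hg (by positivity) (hρ s hs')
      _ = 8 * R / r * (1 / ((s + m) * (1 - s + m))) := by field_simp; ring
      _ ≤ 8 * R / r * ((1 + 2 * m) / ((s + m) * (1 - s + m))) := by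
          gcongr; linarith
      _ = 8 * R / r * ((s + m)⁻¹ + (1 - s + m)⁻¹) := by
          congr 1; field_simp; ring
  refine hbd.trans ?_
  rw [intervalIntegral.integral_const_mul, intervalIntegral.integral_add hi1 hi2, hI1, hI2]
  have hlog : Real.log ((1 + m) / m) ≤ Real.log (2 / m) := by
    apply Real.log_le_log (by positivity)
    gcongr; linarith
  have : 0 ≤ 8 * R / r := by positivity
  calc _ ≤ 8 * R / r * (Real.log (2 / m) + Real.log (2 / m)) := by gcongr
    _ = _ := by ring

lemma int_bound {L ν s u t : ℝ} (hL : 0 < L) (hν : 0 < ν) (hsu : s ≤ u) (hut : u ≤ t) :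
    IntervalIntegrable (fun x => (L + |x - u|) ^ (-(1 + ν))) volume s t ∧
    ∫ x in s..t, (L + |x - u|) ^ (-(1 + ν)) ≤ 2 * L ^ (-ν) / ν := by
  have hc : Continuous (fun x : ℝ => (L + |x - u|) ^ (-(1 + ν))) :=
    (by fun_prop : Continuous fun x : ℝ => L + |x - u|).rpow_const
      (fun x => Or.inl (by positivity))
  have hi := fun a b => hc.intervalIntegrable (μ := volume) a b
  refine ⟨hi _ _, ?_⟩
  have base : ∀ w, 0 ≤ w → ∫ x in L..(L + w), x ^ (-(1 + ν)) ≤ L ^ (-ν) / ν := by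
    intro w hw
    rw [integral_rpow (Or.inr ⟨by linarith, by
      rw [uIcc_of_le (by linarith)]; intro h; linarith [h.1]⟩)]
    have e : -(1 + ν) + 1 = -ν := by ring
    rw [e, div_neg, ← neg_div]
    have : 0 ≤ (L + w) ^ (-ν) := by positivity
    gcongr
    linarith
  rw [← intervalIntegral.integral_add_adjacent_intervals (hi s u) (hi u t)]
  have h1 : ∫ x in s..u, (L + |x - u|) ^ (-(1 + ν)) = ∫ x in L..(L + (u - s)), x ^ (-(1 + ν)) := by
    have := intervalIntegral.integral_comp_sub_left (fun x : ℝ => x ^ (-(1 + ν)))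
      (a := s) (b := u) (L + u)
    rw [show L + u - u = L by ring, show L + u - s = L + (u - s) by ring] at this
    rw [← this]
    refine intervalIntegral.integral_congr fun x hx => ?_
    rw [uIcc_of_le hsu] at hx
    rw [abs_of_nonpos (by linarith [hx.2])]
    congr 1; ring
  have h2 : ∫ x in u..t, (L + |x - u|) ^ (-(1 + ν)) = ∫ x in L..(L + (t - u)), x ^ (-(1 + ν)) := by
    have := intervalIntegral.integral_comp_add_right (fun x : ℝ => x ^ (-(1 + ν)))
      (a := u) (b := t) (L - u)
    rw [show u + (L - u) = L by ring, show t + (L - u) = L + (t - u) by ring] at this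
    rw [← this]
    refine intervalIntegral.integral_congr fun x hx => ?_
    rw [uIcc_of_le hut] at hx
    rw [abs_of_nonneg (by linarith [hx.1])]
    congr 1; ring
  rw [h1, h2]
  have b1 := base (u - s) (by linarith)
  have b2 := base (t - u) (by linarith)
  rw [mul_div_assoc]
  linarith

lemma ball_bdist_subset {E : Type*} [NormedAddCommGroup E] [NormedSpace ℂ E]
    {D : Set E} (hDo : IsOpen D) {x : E} (hx : x ∈ D) {m : ℝ} (hm : m ≤ bdist D x) :
    ball x m ⊆ D := by
  let _ : NormedSpace ℝ E := NormedSpace.restrictScalars ℝ ℂ E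
  rcases le_or_gt m 0 with h0 | h0
  · rw [ball_eq_empty.2 h0]; exact empty_subset _
  have hconn : IsPreconnected (ball x m) := (convex_ball x m).isPreconnected
  have hdis : ∀ w ∈ ball x m, w ∉ frontier D := by
    intro w hw hwf
    have := Metric.infDist_le_dist_of_mem (x := x) hwf
    rw [mem_ball'] at hw
    unfold bdist at hm
    linarith
  refine hconn.subset_left_of_subset_union hDo isClosed_closure.isOpen_compl
    (v := (closure D)ᶜ) ?_ ?_ ⟨x, mem_ball_self h0, hx⟩
  · exact disjoint_compl_right.mono_left subset_closure
  · intro w hw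
    by_cases hc : w ∈ closure D
    · left
      by_contra hwD
      exact hdis w hw (by rw [hDo.frontier_eq]; exact ⟨hc, hwD⟩)
    · right; exact hc

lemma frontier_line_nonempty {E : Type*} [NormedAddCommGroup E] [NormedSpace ℂ E]
    {D : Set E} (hDo : IsOpen D) (hDb : Bornology.IsBounded D) {z v : E} (hz : z ∈ D)
    (hv : v ≠ 0) : (frontier D ∩ {w | ∃ c : ℂ, w = z + c • v}).Nonempty := by
  let φ : ℂ → E := fun c => z + c • v
  have hφ : Continuous φ := by fun_prop
  have hv' : 0 < ‖v‖ := norm_pos_iff.2 hv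
  have hne : (frontier (φ ⁻¹' D)).Nonempty := by
    rw [nonempty_frontier_iff]
    refine ⟨⟨0, by simpa [φ] using hz⟩, fun hu => ?_⟩
    obtain ⟨M, hM0, hM⟩ := hDb.exists_pos_norm_le
    have h1 : φ (((M + ‖z‖ + 1) / ‖v‖ : ℝ) : ℂ) ∈ D := by
      have : (((M + ‖z‖ + 1) / ‖v‖ : ℝ) : ℂ) ∈ φ ⁻¹' D := hu ▸ mem_univ _
      exact this
    have h2 := hM _ h1
    have h3 : ‖(((M + ‖z‖ + 1) / ‖v‖ : ℝ) : ℂ) • v‖ = M + ‖z‖ + 1 := by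
      rw [norm_smul, Complex.norm_real, Real.norm_of_nonneg (by positivity),
        div_mul_cancel₀ _ hv'.ne']
    have h4 : ‖(((M + ‖z‖ + 1) / ‖v‖ : ℝ) : ℂ) • v‖ ≤
        ‖φ (((M + ‖z‖ + 1) / ‖v‖ : ℝ) : ℂ)‖ + ‖z‖ := by
      have : (((M + ‖z‖ + 1) / ‖v‖ : ℝ) : ℂ) • v = φ (((M + ‖z‖ + 1) / ‖v‖ : ℝ) : ℂ) - z := by
        simp [φ]
      rw [this]; exact norm_sub_le _ _
    linarith
  obtain ⟨c, hc⟩ := hne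
  exact ⟨φ c, hφ.frontier_preimage_subset D hc, c, rfl⟩

lemma bdist_pos {E : Type*} [NormedAddCommGroup E] [NormedSpace ℂ E] [Nontrivial E]
    {D : Set E} (hDo : IsOpen D) (hDb : Bornology.IsBounded D) {z : E} (hz : z ∈ D) :
    0 < bdist D z := by
  obtain ⟨v, hv⟩ := exists_ne (0 : E)
  have hne : (frontier D).Nonempty := (frontier_line_nonempty hDo hDb hz hv).mono inter_subset_left
  refine (isClosed_frontier.notMem_iff_infDist_pos hne).1 ?_
  rw [hDo.frontier_eq]
  exact fun h => h.2 hz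

lemma ac_continuousOn {E : Type*} [NormedAddCommGroup E] [NormedSpace ℂ E]
    {σ g : ℝ → E} {a b : ℝ} (hab : a ≤ b) (h : IsACWithDeriv σ g a b) :
    ContinuousOn σ (Icc a b) := by
  have h1 := intervalIntegral.continuousOn_primitive_interval' h.1 left_mem_uIcc
  rw [uIcc_of_le hab] at h1
  exact (h1.const_add (σ a)).congr (fun t ht => h.2 t ht)

lemma ac_sub {E : Type*} [NormedAddCommGroup E] [NormedSpace ℂ E]
    {σ g : ℝ → E} {a b s t : ℝ} (h : IsACWithDeriv σ g a b) (has : a ≤ s) (hst : s ≤ t)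
    (htb : t ≤ b) : σ t - σ s = ∫ u in s..t, g u := by
  have hab : a ≤ b := has.trans (hst.trans htb)
  have hi : ∀ u ∈ Icc a b, IntervalIntegrable g volume a u := fun u hu =>
    h.1.mono_set (by rw [uIcc_of_le hu.1, uIcc_of_le hab]; exact Icc_subset_Icc le_rfl hu.2)
  have hs : s ∈ Icc a b := ⟨has, hst.trans htb⟩
  have ht : t ∈ Icc a b := ⟨has.trans hst, htb⟩
  rw [h.2 t ht, h.2 s hs, add_sub_add_left_eq_sub,
    intervalIntegral.integral_interval_sub_left (hi t ht) (hi s hs)]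

/-- Local visibility: an almost geodesic that stays near `ξ` and moves a definite distance
must reach a definite distance from the boundary. -/
lemma visibility {E : Type*} [NormedAddCommGroup E] [NormedSpace ℂ E] [CompleteSpace E]
    [Nontrivial E] {Ω D : Set E} (hΩo : IsOpen Ω) (hDΩ : D ⊆ Ω)
    {C₀ ν : ℝ} (hlog : LogTypeConvexWith D C₀ ν) {ξ o : E} {r R ε κ : ℝ}
    (hR : 0 < R) (hΩR : ∀ x ∈ Ω, ∀ y ∈ Ω, dist x y ≤ R)
    (hr : 0 < r) (hr1 : r ≤ 1) (ho : ball o r ⊆ D)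
    (hε : 0 < ε) (hball : Ω ∩ ball ξ ε ⊆ D) (hκ : 0 ≤ κ) :
    ∃ c, 0 < c ∧ c ≤ r ∧ ∀ (a b : ℝ) (σ g : ℝ → E), AlmostGeodesicOn Ω 1 κ σ g a b →
      ∀ s t, a ≤ s → s ≤ t → t ≤ b → (∀ u ∈ Icc s t, σ u ∈ closedBall ξ (ε / 2)) →
      ε / 4 ≤ ‖σ t - σ s‖ → ∃ u ∈ Icc s t, c ≤ bdist D (σ u) := by
  obtain ⟨hDo, -, hDb, hDc, hC₀, hν, hlog⟩ := hlog
  have hoD : o ∈ D := ho (mem_ball_self hr)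
  set B := 16 * R / r with hB
  have hB0 : 0 ≤ B := by positivity
  set C₁ := κ + B * Real.log 2 with hC₁
  set ε' := min (ε / 2) R with hε'
  have hε'0 : 0 < ε' := lt_min (by linarith) hR
  set A := 2 * R / ε' * C₀ * (1 + B) ^ (1 + ν) with hA
  have hA0 : 0 ≤ A := by positivity
  obtain ⟨L, hL1, hLC, hLr, hLs⟩ : ∃ L : ℝ, 1 ≤ L ∧ 2 * C₁ ≤ L ∧ Real.exp (-L) ≤ r ∧
      A * (2 * (L / 2) ^ (-ν) / ν) < ε / 4 := by
    have t1 : Tendsto (fun L : ℝ => A * (2 * (L / 2) ^ (-ν) / ν)) atTop (𝓝 (A * (2 * 0 / ν))) := by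
      refine Tendsto.const_mul _ (Tendsto.div_const (Tendsto.const_mul _ ?_) _)
      exact (tendsto_rpow_neg_atTop hν).comp (tendsto_id.atTop_div_const (by norm_num))
    rw [mul_zero, zero_div, mul_zero] at t1
    have t2 : Tendsto (fun L : ℝ => Real.exp (-L)) atTop (𝓝 0) := Real.tendsto_exp_neg_atTop_nhds_zero
    obtain ⟨L, h⟩ := (((eventually_ge_atTop 1).and (eventually_ge_atTop (2 * C₁))).and
      ((t2.eventually (ge_mem_nhds hr)).and (t1.eventually (gt_mem_nhds (show 0 < ε / 4 by linarith))))).exists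
    exact ⟨L, h.1.1, h.1.2, h.2.1, h.2.2⟩
  refine ⟨Real.exp (-L), Real.exp_pos _, hLr, ?_⟩
  intro a b σ g ⟨hσm, hac, hag, hkob⟩ s t has hst htb hcl hdisp
  by_contra hcon
  push Not at hcon
  have hab : a ≤ b := has.trans (hst.trans htb)
  have hsub : Icc s t ⊆ Icc a b := Icc_subset_Icc has htb
  have hσΩ : ∀ u ∈ Icc s t, σ u ∈ Ω := fun u hu => hσm (hsub hu)
  have hσD : ∀ u ∈ Icc s t, σ u ∈ D := fun u hu =>
    hball ⟨hσΩ u hu, closedBall_subset_ball (by linarith) (hcl u hu)⟩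
  have hcont : ContinuousOn (fun u => bdist D (σ u)) (Icc s t) :=
    (Metric.continuous_infDist_pt (frontier D)).comp_continuousOn
      ((ac_continuousOn hab hac).mono hsub)
  obtain ⟨u, hu, humax⟩ := isCompact_Icc.exists_isMaxOn (nonempty_Icc.2 hst) hcont
  have hgb : ∀ᵐ x ∂volume, x ∈ Ioc s t → ‖g x‖ ≤ A * (L / 2 + |x - u|) ^ (-(1 + ν)) := by
    filter_upwards [hkob] with x hx hxI
    have hxI' : x ∈ Icc s t := ⟨hxI.1.le, hxI.2⟩
    have hk := hx (hsub hxI')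
    have hpos : 0 < L / 2 + |x - u| := by positivity
    rcases eq_or_ne (g x) 0 with h0 | h0
    · rw [h0, norm_zero]; positivity
    have hxD := hσD x hxI'
    set δ := bdist D (σ x) with hδ
    have hδ0 : 0 < δ := bdist_pos hDo hDb hxD
    have hδc : δ < Real.exp (-L) := hcon x hxI'
    have hδu : δ ≤ bdist D (σ u) := humax hxI'
    have hℓ : L ≤ -Real.log δ := by
      have := Real.log_lt_log hδ0 hδc
      rw [Real.log_exp] at this; linarith
    -- the metric lower bound
    have hlow : ε' / R * ‖g x‖ ≤ 2 * bdistDir D (σ x) (g x) * kobMetric Ω (σ x) (g x) := by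
      refine kobMetric_lower hΩo hDo hDc hR hε'0 (min_le_right _ _) (hσΩ x hxI')
        (fun y hy => hΩR y hy _ (hσΩ x hxI')) ?_ (frontier_line_nonempty hDo hDb hxD h0)
      intro y hy
      refine hball ⟨hy.1, ?_⟩
      have h1 := hcl x hxI'
      have h2 := hy.2
      rw [mem_closedBall] at h1
      rw [mem_ball] at h2 ⊢
      have h3 : ε' ≤ ε / 2 := min_le_left _ _
      linarith [dist_triangle y (σ x) ξ]
    have hdir := hlog (σ x) hxD (g x) h0
    rw [← hδ, abs_of_nonpos (by linarith)] at hdir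
    have hd0 : 0 ≤ bdistDir D (σ x) (g x) := Metric.infDist_nonneg
    -- the distance upper bound
    have hK : kobDist Ω (σ x) (σ u) ≤ B * Real.log (2 / δ) := by
      refine kobDist_le_log hDΩ hDc hr1 hδ0 (hδc.le.trans hLr) ho
        (ball_bdist_subset hDo hxD le_rfl) (ball_bdist_subset hDo (hσD u hu) hδu) ?_ ?_
      · rw [← dist_eq_norm]; exact hΩR _ (hDΩ hoD) _ (hσΩ x hxI')
      · rw [← dist_eq_norm]; exact hΩR _ (hσΩ u hu) _ (hDΩ hoD)
    have hK2 := (hag x (hsub hxI') u (hsub hu)).1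
    rw [Real.log_div (by norm_num) hδ0.ne'] at hK
    rw [abs_sub_comm] at hK2
    have hmain : L / 2 + |x - u| ≤ (1 + B) * (-Real.log δ) := by
      have : C₁ = κ + B * Real.log 2 := hC₁
      nlinarith
    set ℓ := -Real.log δ with hℓd
    have hℓ0 : 0 < ℓ := by linarith
    have hinv : C₀ / ℓ ^ (1 + ν) ≤ C₀ * ((1 + B) ^ (1 + ν) * (L / 2 + |x - u|) ^ (-(1 + ν))) := by
      rw [div_eq_mul_inv]
      gcongr
      rw [Real.rpow_neg hpos.le, inv_le_iff_one_le_mul₀ (by positivity), ← div_eq_mul_inv,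
        div_mul_eq_mul_div, one_le_div (by positivity), ← Real.mul_rpow (by positivity) hℓ0.le]
      exact Real.rpow_le_rpow hpos.le hmain (by linarith)
    have h5 : ε' / R * ‖g x‖ ≤ 2 * (C₀ * ((1 + B) ^ (1 + ν) * (L / 2 + |x - u|) ^ (-(1 + ν)))) := by
      have h6 : 2 * bdistDir D (σ x) (g x) * kobMetric Ω (σ x) (g x) ≤
          2 * bdistDir D (σ x) (g x) * 1 := by gcongr
      linarith
    have h7 : ‖g x‖ = R / ε' * (ε' / R * ‖g x‖) := by field_simp
    rw [h7]
    calc _ ≤ R / ε' * (2 * (C₀ * ((1 + B) ^ (1 + ν) * (L / 2 + |x - u|) ^ (-(1 + ν))))) := by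
          gcongr
      _ = _ := by rw [hA]; ring
  obtain ⟨hint, hle⟩ := int_bound (L := L / 2) (by linarith) hν hu.1 hu.2
  have h1 := intervalIntegral.norm_integral_le_of_norm_le hst hgb (hint.const_mul A)
  rw [← ac_sub hac has hst htb, intervalIntegral.integral_const_mul] at h1
  have h2 := mul_le_mul_of_nonneg_left hle hA0
  linarith

/-- First exit time from a ball. -/
lemma first_exit {E : Type*} [NormedAddCommGroup E] {σ : ℝ → E} {a b ρ : ℝ} {ξ : E}
    (hc : ContinuousOn σ (Icc a b)) (hex : ∃ t ∈ Icc a b, ρ ≤ dist (σ t) ξ)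
    (ha : dist (σ a) ξ < ρ) :
    ∃ t ∈ Icc a b, ρ ≤ dist (σ t) ξ ∧ ∀ u ∈ Icc a t, dist (σ u) ξ ≤ ρ := by
  have hcd : ContinuousOn (fun t => dist (σ t) ξ) (Icc a b) :=
    (by fun_prop : Continuous fun x : E => dist x ξ).comp_continuousOn hc
  have hcomp : IsCompact (Icc a b ∩ (fun t => dist (σ t) ξ) ⁻¹' Ici ρ) :=
    isCompact_Icc.of_isClosed_subset
      (hcd.preimage_isClosed_of_isClosed isClosed_Icc isClosed_Ici) inter_subset_left
  obtain ⟨t, ht⟩ := hcomp.exists_isLeast (by obtain ⟨t, h1, h2⟩ := hex; exact ⟨t, h1, h2⟩)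
  refine ⟨t, ht.1.1, ht.1.2, ?_⟩
  have hlt : ∀ u ∈ Icc a b, u < t → dist (σ u) ξ < ρ := by
    intro u hu hut
    by_contra h
    push Not at h
    exact absurd (ht.2 ⟨hu, h⟩) (not_le.2 hut)
  have hat : a < t := lt_of_le_of_ne ht.1.1.1 (by rintro rfl; exact absurd ht.1.2 (not_le.2 ha))
  have hct : ContinuousOn (fun t => dist (σ t) ξ) (Icc a t) :=
    hcd.mono (Icc_subset_Icc le_rfl ht.1.1.2)
  intro u hu
  rcases hu.2.lt_or_eq with h | rfl
  · exact (hlt u ⟨hu.1, hu.2.trans ht.1.1.2⟩ h).le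
  · have h1 : Tendsto (fun t => dist (σ t) ξ) (𝓝[Ico a u] u) (𝓝 (dist (σ u) ξ)) :=
      (hct u ⟨hu.1, le_rfl⟩).mono_left (nhdsWithin_mono _ Ico_subset_Icc_self)
    have : (𝓝[Ico a u] u).NeBot := by
      rw [← mem_closure_iff_nhdsWithin_neBot, closure_Ico hat.ne]
      exact ⟨hat.le, le_rfl⟩
    refine le_of_tendsto h1 ?_
    filter_upwards [self_mem_nhdsWithin] with v hv
    exact (hlt v ⟨hv.1, hv.2.le.trans ht.1.1.2⟩ hv.2).le

lemma last_exit {E : Type*} [NormedAddCommGroup E] {σ : ℝ → E} {a b ρ : ℝ} {ξ : E}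
    (hc : ContinuousOn σ (Icc a b)) (hex : ∃ t ∈ Icc a b, ρ ≤ dist (σ t) ξ)
    (hb : dist (σ b) ξ < ρ) :
    ∃ t ∈ Icc a b, ρ ≤ dist (σ t) ξ ∧ ∀ u ∈ Icc t b, dist (σ u) ξ ≤ ρ := by
  have hc' : ContinuousOn (fun t => σ (-t)) (Icc (-b) (-a)) :=
    hc.comp continuousOn_neg (fun t ht => ⟨by linarith [ht.2], by linarith [ht.1]⟩)
  obtain ⟨t, ht, h1, h2⟩ := first_exit (σ := fun t => σ (-t)) (ρ := ρ) (ξ := ξ) hc'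
    (by
      obtain ⟨t, ht, h⟩ := hex
      exact ⟨-t, ⟨by linarith [ht.2], by linarith [ht.1]⟩, by simpa using h⟩)
    (by simpa using hb)
  refine ⟨-t, ⟨by linarith [ht.2], by linarith [ht.1]⟩, h1, fun u hu => ?_⟩
  have := h2 (-u) ⟨by linarith [hu.2], by linarith [hu.1]⟩
  simpa using this

theorem statement_6 {n : ℕ} (hn : 2 ≤ n)
    (Ω U : Set (EuclideanSpace ℂ (Fin n)))
    (hΩo : IsOpen Ω) (hΩc : IsConnected Ω) (hΩb : Bornology.IsBounded Ω)
    (hUo : IsOpen U)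
    (hlog : LogTypeConvex (Ω ∩ U))
    (ξ : EuclideanSpace ℂ (Fin n)) (hξ : ξ ∈ frontier Ω ∩ U)
    (κ : ℝ) (hκ : 0 ≤ κ)
    (ε : ℝ) (hε : 0 < ε) (hball : ball ξ ε ⊆ U) :
    ∃ δ : ℝ, 0 < δ ∧ ∃ C : ℝ, 0 < C ∧
      ∀ p ∈ Ω ∩ ball ξ δ, ∀ q ∈ Ω ∩ ball ξ δ,
      ∀ (a b : ℝ) (σ g : ℝ → EuclideanSpace ℂ (Fin n)), a ≤ b →
        AlmostGeodesicOn Ω 1 κ σ g a b → σ a = p → σ b = q →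
        ∃ σ' : ℝ → EuclideanSpace ℂ (Fin n), RoughGeodesicOn Ω C σ' a b ∧ σ' a = p ∧ σ' b = q ∧
          σ' '' Icc a b ⊆ ball ξ ε := by
  obtain ⟨C₀, ν, hlog⟩ := hlog
  have : Nonempty (Fin n) := ⟨⟨0, by omega⟩⟩
  have hDo : IsOpen (Ω ∩ U) := hlog.1
  obtain ⟨o, hoD⟩ := hlog.2.1
  obtain ⟨r', hr', ho'⟩ := Metric.isOpen_iff.1 hDo o hoD
  set r := min r' 1 with hrdef
  have hr : 0 < r := lt_min hr' one_pos
  have ho : ball o r ⊆ Ω ∩ U := (ball_subset_ball (min_le_left _ _)).trans ho'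
  obtain ⟨R', hR'⟩ := Metric.isBounded_iff.1 hΩb
  set R := max R' 1 with hRdef
  have hR : 0 < R := lt_max_of_lt_right one_pos
  have hΩR : ∀ x ∈ Ω, ∀ y ∈ Ω, dist x y ≤ R := fun x hx y hy =>
    (hR' hx hy).trans (le_max_left _ _)
  have hloc : Ω ∩ ball ξ ε ⊆ Ω ∩ U := fun x hx => ⟨hx.1, hball hx.2⟩
  obtain ⟨c, hc0, hcr, hvis⟩ := visibility hΩo inter_subset_left hlog hR hΩR hr
    (min_le_right _ _) ho hε hloc hκ
  set M := 16 * R / r * Real.log (2 / c) with hM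
  have hM0 : 0 ≤ M := by
    have : r ≤ 1 := min_le_right _ _
    have : 0 ≤ Real.log (2 / c) := Real.log_nonneg (by rw [le_div_iff₀ hc0]; linarith)
    positivity
  refine ⟨ε / 4, by linarith, κ + 2 * (M + κ) + 1, by linarith, ?_⟩
  intro p hp q hq a b σ g hab hσ hσa hσb
  by_cases hex : ∃ t ∈ Icc a b, ε / 2 ≤ dist (σ t) ξ
  · have hcont := ac_continuousOn hab hσ.2.1
    have hpa : dist (σ a) ξ < ε / 4 := by rw [hσa]; exact hp.2
    have hqb : dist (σ b) ξ < ε / 4 := by rw [hσb]; exact hq.2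
    obtain ⟨t₁, ht₁, hd₁, hi₁⟩ := first_exit hcont hex (by linarith)
    obtain ⟨t₂, ht₂, hd₂, hi₂⟩ := last_exit hcont hex (by linarith)
    obtain ⟨s₁, hs₁, hc₁⟩ := hvis a b σ g hσ a t₁ le_rfl ht₁.1 ht₁.2 hi₁ (by
      rw [← dist_eq_norm]
      linarith [dist_triangle (σ t₁) (σ a) ξ])
    obtain ⟨s₂, hs₂, hc₂⟩ := hvis a b σ g hσ t₂ b ht₂.1 ht₂.2 le_rfl hi₂ (by
      rw [← dist_eq_norm, dist_comm]
      linarith [dist_triangle (σ t₂) (σ b) ξ])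
    have hs₁I : s₁ ∈ Icc a b := ⟨hs₁.1, hs₁.2.trans ht₁.2⟩
    have hs₂I : s₂ ∈ Icc a b := ⟨ht₂.1.trans hs₂.1, hs₂.2⟩
    have hb₁ : ∀ u ∈ Icc a s₁, σ u ∈ ball ξ ε := fun u hu => by
      rw [mem_ball]; linarith [hi₁ u ⟨hu.1, hu.2.trans hs₁.2⟩]
    have hb₂ : ∀ u ∈ Icc s₂ b, σ u ∈ ball ξ ε := fun u hu => by
      rw [mem_ball]; linarith [hi₂ u ⟨hs₂.1.trans hu.1, hu.2⟩]
    have hD₁ : σ s₁ ∈ Ω ∩ U := hloc ⟨hσ.1 hs₁I, hb₁ s₁ ⟨hs₁.1, le_rfl⟩⟩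
    have hD₂ : σ s₂ ∈ Ω ∩ U := hloc ⟨hσ.1 hs₂I, hb₂ s₂ ⟨le_rfl, hs₂.2⟩⟩
    have hK : kobDist Ω (σ s₁) (σ s₂) ≤ M := by
      refine kobDist_le_log inter_subset_left hlog.2.2.2.1 (min_le_right _ _) hc0 hcr ho
        (ball_bdist_subset hDo hD₁ hc₁) (ball_bdist_subset hDo hD₂ hc₂) ?_ ?_
      · rw [← dist_eq_norm]; exact hΩR _ hoD.1 _ hD₁.1
      · rw [← dist_eq_norm]; exact hΩR _ hD₂.1 _ hoD.1
    have hlen : |s₂ - s₁| ≤ M + κ := by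
      have := (hσ.2.2.1 s₁ hs₁I s₂ hs₂I).1
      linarith
    let φ : ℝ → ℝ := fun t => if s₁ ≤ t ∧ t < s₂ then s₁ else t
    have hφd : ∀ t, |φ t - t| ≤ M + κ := by
      intro t
      by_cases h : s₁ ≤ t ∧ t < s₂
      · simp only [φ, if_pos h]
        refine le_trans ?_ hlen
        rw [abs_of_nonpos (by linarith [h.1]), abs_of_nonneg (by linarith [h.1, h.2])]
        linarith [h.2]
      · simp only [φ, if_neg h, sub_self, abs_zero]; linarith
    have hφI : ∀ t ∈ Icc a b, φ t ∈ Icc a b := by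
      intro t ht
      by_cases h : s₁ ≤ t ∧ t < s₂
      · simpa only [φ, if_pos h] using hs₁I
      · simpa only [φ, if_neg h] using ht
    refine ⟨fun t => σ (φ t), ⟨fun t ht => hσ.1 (hφI t ht), ?_⟩, ?_, ?_, ?_⟩
    · intro s hs t ht
      have h := hσ.2.2.1 (φ s) (hφI s hs) (φ t) (hφI t ht)
      have e1 := abs_le.1 (hφd s)
      have e2 := abs_le.1 (hφd t)
      have u1 : |φ t - φ s| ≤ |t - s| + 2 * (M + κ) := by
        calc |φ t - φ s| = |(t - s) + (φ t - t) - (φ s - s)| := by congr 1; ring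
          _ ≤ |(t - s) + (φ t - t)| + |φ s - s| := abs_sub _ _
          _ ≤ |t - s| + |φ t - t| + |φ s - s| := by gcongr; exact abs_add_le _ _
          _ ≤ _ := by linarith [hφd s, hφd t]
      have u2 : |t - s| ≤ |φ t - φ s| + 2 * (M + κ) := by
        calc |t - s| = |(φ t - φ s) - (φ t - t) + (φ s - s)| := by congr 1; ring
          _ ≤ |(φ t - φ s) - (φ t - t)| + |φ s - s| := abs_add_le _ _
          _ ≤ |φ t - φ s| + |φ t - t| + |φ s - s| := by gcongr; exact abs_sub _ _
          _ ≤ _ := by linarith [hφd s, hφd t]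
      constructor <;> linarith [h.1, h.2]
    · have : φ a = a := by
        by_cases h : s₁ ≤ a ∧ a < s₂
        · simp only [φ, if_pos h]; exact le_antisymm h.1 hs₁.1
        · simp only [φ, if_neg h]
      simp only [this, hσa]
    · have : φ b = b := by
        have h : ¬ (s₁ ≤ b ∧ b < s₂) := fun h => absurd h.2 (not_lt.2 hs₂.2)
        simp only [φ, if_neg h]
      simp only [this, hσb]
    · rintro _ ⟨t, ht, rfl⟩
      by_cases h : s₁ ≤ t ∧ t < s₂
      · simp only [φ, if_pos h]; exact hb₁ s₁ ⟨hs₁.1, le_rfl⟩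
      · simp only [φ, if_neg h]
        rcases lt_or_ge t s₁ with h1 | h1
        · exact hb₁ t ⟨ht.1, h1.le⟩
        · exact hb₂ t ⟨not_lt.1 fun h2 => h ⟨h1, h2⟩, ht.2⟩
  · push Not at hex
    refine ⟨σ, ⟨hσ.1, ?_⟩, hσa, hσb, ?_⟩
    · intro s hs t ht
      have h := hσ.2.2.1 s hs t ht
      constructor <;> linarith [h.1, h.2]
    · rintro _ ⟨t, ht, rfl⟩
      rw [mem_ball]; linarith [hex t ht]
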